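/- Let A and B be the companion matrices of f(x) = (x-1)^6 and g(x) = (x+1)^4(x^2+x+1) respectively, regarded as elements of GL(6,ℤ). Then the elements t = A⁻¹B and r = A⁻¹BA both have infinite order, the subgroup of GL(6,ℤ) generated by A and B equals the subgroup generated by t and r, and this group is the internal free product of the cyclic subgroups ⟨t⟩ and ⟨r⟩; in particular, the hypergeometric group Γ(α,β) with α = (0,0,0,0,0,0) and β = (1/2,1/2,1/2,1/2,1/3,2/3) is isomorphic to ℤ * ℤ, a free group of rank 2. -/

import Mathlib

open Matrix

/-- The companion matrix of `f(x) = (x-1)^6 = x^6 - 6x^5 + 15x^4 - 20x^3 + 15x^2 - 6x + 1`. -/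
def companionF : Matrix (Fin 6) (Fin 6) ℤ :=
  !![0,0,0,0,0,-1; 1,0,0,0,0,6; 0,1,0,0,0,-15; 0,0,1,0,0,20; 0,0,0,1,0,-15; 0,0,0,0,1,6]

/-- The companion matrix of `g(x) = (x+1)^4(x^2+x+1) = x^6 + 5x^5 + 11x^4 + 14x^3 + 11x^2 + 5x + 1`. -/
def companionG : Matrix (Fin 6) (Fin 6) ℤ :=
  !![0,0,0,0,0,-1; 1,0,0,0,0,-5; 0,1,0,0,0,-11; 0,0,1,0,0,-14; 0,0,0,1,0,-11; 0,0,0,0,1,-5]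

namespace HypFree

section PingPong

open Monoid.CoprodI Pointwise

/-- A ping-pong lemma for two infinite cyclic factors, which needs only one point of the second
set outside the first one. -/
theorem word_ne_one {G : Type} [Group G] {H : Fin 2 → Type} [∀ i, Group (H i)]
    (f : ∀ i, H i →* G) {α : Type} [MulAction G α] (X : Fin 2 → Set α)
    (hpp : Pairwise fun i j => ∀ h : H i, h ≠ 1 → f i h • X j ⊆ X i)
    (x₀ : α) (h1 : x₀ ∈ X 1) (h0 : x₀ ∉ X 0)
    (c : H 0) (hc : ∀ n m : H 0, n ≠ 1 → m ≠ 1 → (c * n ≠ 1 ∧ c ≠ 1) ∨ (c * c * n ≠ 1 ∧ c * c ≠ 1))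
    (hc1 : c ≠ 1)
    {i j : Fin 2} (w : NeWord H i j) : lift f w.prod ≠ 1 := by
  have main : ∀ w : NeWord H 0 0, lift f w.prod ≠ 1 := by
    intro w hw
    have := lift_word_ping_pong f X hpp w (k := 1) (by decide)
    rw [hw, one_smul] at this
    exact h0 (this h1)
  have h01 : ∀ w : NeWord H 0 1, lift f w.prod ≠ 1 := by
    intro w hw
    obtain ⟨d, hd1, hd2⟩ : ∃ d : H 0, d * w.head ≠ 1 ∧ d ≠ 1 := by
      by_cases hh : w.head = 1
      · exact ⟨c, by simpa [hh] using hc1, hc1⟩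
      · rcases hc w.head w.head hh hh with h | h
        · exact ⟨_, h⟩
        · exact ⟨_, h⟩
    refine main (NeWord.append (NeWord.mulHead w d hd1) (by decide : (1 : Fin 2) ≠ 0)
      (NeWord.singleton d⁻¹ (inv_ne_one.mpr hd2))) ?_
    simp [hw]
  have h11 : ∀ w : NeWord H 1 1, lift f w.prod ≠ 1 := by
    intro w hw
    refine main (NeWord.append (NeWord.append (NeWord.singleton c hc1)
      (by decide : (0 : Fin 2) ≠ 1) w) (by decide : (1 : Fin 2) ≠ 0)
      (NeWord.singleton c⁻¹ (inv_ne_one.mpr hc1))) ?_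
    simp [hw]
  have h10 : ∀ w : NeWord H 1 0, lift f w.prod ≠ 1 := by
    intro w hw
    apply h01 w.inv
    simpa using hw
  fin_cases i <;> fin_cases j
  · exact main w
  · exact h01 w
  · exact h10 w
  · exact h11 w

theorem freeGroup_unit_zpow (h : FreeGroup Unit) : ∃ n : ℤ, h = FreeGroup.of () ^ n :=
  ⟨FreeGroup.freeGroupUnitEquivInt h, (FreeGroup.freeGroupUnitEquivInt.symm_apply_apply h).symm⟩

theorem of_zpow_ne_one (n : ℤ) (hn : n ≠ 0) : (FreeGroup.of () : FreeGroup Unit) ^ n ≠ 1 := by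
  intro h
  apply hn
  have h1 : FreeGroup.freeGroupUnitEquivInt (FreeGroup.freeGroupUnitEquivInt.symm n)
      = FreeGroup.freeGroupUnitEquivInt (FreeGroup.freeGroupUnitEquivInt.symm 0) := by
    congr 1
  simpa only [Equiv.apply_symm_apply] using h1

theorem lift_injective {G : Type} [Group G] (a : Fin 2 → G) {α : Type} [MulAction G α]
    (X : Fin 2 → Set α)
    (h01 : ∀ n : ℤ, n ≠ 0 → ∀ x ∈ X 1, a 0 ^ n • x ∈ X 0)
    (h10 : ∀ n : ℤ, n ≠ 0 → ∀ x ∈ X 0, a 1 ^ n • x ∈ X 1)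
    (x₀ : α) (h1 : x₀ ∈ X 1) (h0 : x₀ ∉ X 0) : Function.Injective (FreeGroup.lift a) := by
  classical
  have key : FreeGroup.lift a =
      (lift fun i => FreeGroup.lift fun _ : Unit => a i).comp
        (@freeGroupEquivCoprodI (Fin 2)).toMonoidHom := by
    ext i
    simp
  rw [key, MonoidHom.coe_comp]
  refine Function.Injective.comp ?_ (MulEquiv.injective freeGroupEquivCoprodI)
  let H : Fin 2 → Type := fun _ => FreeGroup Unit
  let f : ∀ i, H i →* G := fun i => FreeGroup.lift fun _ => a i
  have hpp : Pairwise fun i j => ∀ h : H i, h ≠ 1 → f i h • X j ⊆ X i := by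
    intro i j hij h hh
    obtain ⟨n, rfl⟩ := freeGroup_unit_zpow h
    have hn : n ≠ 0 := by
      rintro rfl
      exact hh (zpow_zero _)
    have hf : f i (FreeGroup.of () ^ n) = a i ^ n := by
      change FreeGroup.lift (fun _ => a i) (FreeGroup.of () ^ n) = _
      simp
    rintro _ ⟨x, hx, rfl⟩
    change f i (FreeGroup.of () ^ n) • x ∈ X i
    rw [hf]
    fin_cases i <;> fin_cases j
    · exact absurd rfl hij
    · exact h01 n hn x hx
    · exact h10 n hn x hx
    · exact absurd rfl hij
  have hne : (FreeGroup.of () : FreeGroup Unit) ≠ 1 := by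
    have := of_zpow_ne_one 1 one_ne_zero
    simpa using this
  have hw : ∀ (i j : Fin 2) (w : NeWord H i j), lift f w.prod ≠ 1 := by
    intro i j w
    refine word_ne_one f X hpp x₀ h1 h0 (FreeGroup.of () : FreeGroup Unit) ?_ hne w
    intro n _ _ _
    change FreeGroup Unit at n
    by_cases hcn : (FreeGroup.of () : FreeGroup Unit) * n = 1
    · right
      constructor
      · change FreeGroup.of () * FreeGroup.of () * n ≠ 1
        rw [mul_assoc, hcn, mul_one]
        exact hne
      · have := of_zpow_ne_one 2 two_ne_zero
        change FreeGroup.of () * FreeGroup.of () ≠ 1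
        rwa [zpow_two] at this
    · left
      exact ⟨hcn, hne⟩
  change Function.Injective (lift f)
  rw [injective_iff_map_eq_one]
  intro g hg
  by_contra hne1
  have hword : (Word.equiv g : Word H) ≠ Word.empty := by
    intro h
    apply hne1
    have : g = Word.equiv.symm (Word.equiv g) := (Equiv.symm_apply_apply _ _).symm
    rw [this, h]
    exact Word.prod_empty
  obtain ⟨i, j, w, hw'⟩ := NeWord.of_word _ hword
  apply hw i j w
  have : w.prod = g := by
    have h2 : g = Word.equiv.symm (Word.equiv g) := (Equiv.symm_apply_apply _ _).symm
    rw [h2, ← hw']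
    rfl
  rw [this, hg]

end PingPong

section Final

open Matrix

theorem final_of_injective {G : Type} [Group G] (t r : G)
    (hinj : Function.Injective (FreeGroup.lift ![t, r])) :
    ¬ IsOfFinOrder t ∧ ¬ IsOfFinOrder r ∧
    Function.Injective
      (Monoid.Coprod.lift (Subgroup.zpowers t).subtype (Subgroup.zpowers r).subtype) ∧
    (Monoid.Coprod.lift (Subgroup.zpowers t).subtype
      (Subgroup.zpowers r).subtype).range = Subgroup.closure {t, r} ∧
    Nonempty ((Subgroup.closure {t, r} : Subgroup G) ≃* FreeGroup (Fin 2)) := by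
  set Φ := FreeGroup.lift ![t, r] with hΦ
  have hΦ0 : Φ (FreeGroup.of 0) = t := by simp [hΦ]
  have hΦ1 : Φ (FreeGroup.of 1) = r := by simp [hΦ]
  have hrange : Φ.range = Subgroup.closure {t, r} := by
    rw [hΦ, FreeGroup.range_lift_eq_closure]
    congr 1
    ext x
    simp only [Set.mem_range, Fin.exists_fin_two, Matrix.cons_val_zero, Matrix.cons_val_one,
      Set.mem_insert_iff, Set.mem_singleton_iff, eq_comm]
  have hfin : ∀ i : Fin 2, ¬ IsOfFinOrder (Φ (FreeGroup.of i)) := by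
    intro i h
    obtain ⟨n, hn, hp⟩ := isOfFinOrder_iff_pow_eq_one.mp h
    have hq : (FreeGroup.of i) ^ n = (1 : FreeGroup (Fin 2)) := by
      apply hinj
      rw [map_pow, hp, map_one]
    exact FreeGroup.of_ne_one i ((pow_eq_one_iff_left hn.ne').mp hq)
  have ht : t ∈ Φ.range := ⟨_, hΦ0⟩
  have hr : r ∈ Φ.range := ⟨_, hΦ1⟩
  let e := MonoidHom.ofInjective hinj
  have he : ∀ y : Φ.range, Φ (e.symm y) = y := by
    intro y
    have : e (e.symm y) = y := e.apply_symm_apply y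
    exact congrArg Subtype.val this
  have htz : Subgroup.zpowers t ≤ Φ.range := by rwa [Subgroup.zpowers_le]
  have hrz : Subgroup.zpowers r ≤ Φ.range := by rwa [Subgroup.zpowers_le]
  let ψt : Subgroup.zpowers t →* FreeGroup (Fin 2) :=
    e.symm.toMonoidHom.comp (Subgroup.inclusion htz)
  let ψr : Subgroup.zpowers r →* FreeGroup (Fin 2) :=
    e.symm.toMonoidHom.comp (Subgroup.inclusion hrz)
  let S := Monoid.Coprod.lift ψt ψr
  let R : FreeGroup (Fin 2) →* Monoid.Coprod (Subgroup.zpowers t) (Subgroup.zpowers r) :=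
    FreeGroup.lift ![Monoid.Coprod.inl ⟨t, Subgroup.mem_zpowers t⟩,
      Monoid.Coprod.inr ⟨r, Subgroup.mem_zpowers r⟩]
  have hψt : ψt ⟨t, Subgroup.mem_zpowers t⟩ = FreeGroup.of 0 := by
    apply hinj
    rw [hΦ0]
    exact he _
  have hψr : ψr ⟨r, Subgroup.mem_zpowers r⟩ = FreeGroup.of 1 := by
    apply hinj
    rw [hΦ1]
    exact he _
  have hΦS : Φ.comp S = Monoid.Coprod.lift (Subgroup.zpowers t).subtype
      (Subgroup.zpowers r).subtype := by
    apply Monoid.Coprod.hom_ext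
    · ext x
      simp only [S, MonoidHom.comp_apply, Monoid.Coprod.lift_apply_inl]
      exact he _
    · ext x
      simp only [S, MonoidHom.comp_apply, Monoid.Coprod.lift_apply_inr]
      exact he _
  have hRS : R.comp S = MonoidHom.id _ := by
    apply Monoid.Coprod.hom_ext
    · ext ⟨x, n, rfl⟩
      have : (⟨t ^ n, n, rfl⟩ : Subgroup.zpowers t) = ⟨t, Subgroup.mem_zpowers t⟩ ^ n := by
        ext; simp
      simp only [this, map_zpow, S, MonoidHom.comp_apply, Monoid.Coprod.lift_apply_inl, hψt]
      simp [R]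
    · ext ⟨x, n, rfl⟩
      have : (⟨r ^ n, n, rfl⟩ : Subgroup.zpowers r) = ⟨r, Subgroup.mem_zpowers r⟩ ^ n := by
        ext; simp
      simp only [this, map_zpow, S, MonoidHom.comp_apply, Monoid.Coprod.lift_apply_inr, hψr]
      simp [R]
  have hSinj : Function.Injective S := by
    intro x y hxy
    have := congrArg R hxy
    have h1 := DFunLike.congr_fun hRS x
    have h2 := DFunLike.congr_fun hRS y
    simp only [MonoidHom.comp_apply, MonoidHom.id_apply] at h1 h2
    rw [← h1, ← h2, this]
  refine ⟨?_, ?_, ?_, ?_, ?_⟩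
  · have := hfin 0
    rwa [hΦ0] at this
  · have := hfin 1
    rwa [hΦ1] at this
  · rw [← hΦS, MonoidHom.coe_comp]
    exact hinj.comp hSinj
  · rw [Monoid.Coprod.range_lift, Subgroup.range_subtype, Subgroup.range_subtype,
      Subgroup.zpowers_eq_closure, Subgroup.zpowers_eq_closure, ← Subgroup.closure_union]
    rfl
  · exact ⟨(MulEquiv.subgroupCongr hrange.symm).trans e.symm⟩

end Final

/-- The rational cone generated by a list of integer vectors. -/
def cone (S : List (Fin 6 → ℤ)) : AddSubmonoid (Fin 6 → ℤ) where
  carrier := {x | ∃ d : ℕ, 0 < d ∧ d • x ∈ AddSubmonoid.closure {y | y ∈ S}}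
  zero_mem' := ⟨1, one_pos, by simp⟩
  add_mem' := by
    rintro x y ⟨d, hd, hx⟩ ⟨e, he, hy⟩
    refine ⟨d * e, Nat.mul_pos hd he, ?_⟩
    have h : (d * e) • (x + y) = e • (d • x) + d • (e • y) := by
      rw [smul_add, mul_comm d e, mul_smul, mul_comm e d, mul_smul]
    rw [h]
    exact add_mem (AddSubmonoid.nsmul_mem _ hx e) (AddSubmonoid.nsmul_mem _ hy d)

theorem mem_cone_of_mem {S : List (Fin 6 → ℤ)} {g : Fin 6 → ℤ} (h : g ∈ S) : g ∈ cone S :=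
  ⟨1, one_pos, by rw [one_smul]; exact AddSubmonoid.subset_closure h⟩

theorem mem_cone_of_nsmul {S : List (Fin 6 → ℤ)} {x : Fin 6 → ℤ} {d : ℕ} (hd : 0 < d)
    (h : d • x ∈ cone S) : x ∈ cone S := by
  obtain ⟨e, he, hx⟩ := h
  exact ⟨e * d, Nat.mul_pos he hd, by rwa [mul_smul]⟩

theorem cone_map {S S' : List (Fin 6 → ℤ)} (f : (Fin 6 → ℤ) →+ (Fin 6 → ℤ))
    (h : ∀ g ∈ S, f g ∈ cone S') {x : Fin 6 → ℤ} (hx : x ∈ cone S) : f x ∈ cone S' := by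
  obtain ⟨d, hd, hx⟩ := hx
  apply mem_cone_of_nsmul hd
  rw [← map_nsmul]
  have hle : AddSubmonoid.closure {y | y ∈ S} ≤ (cone S').comap f :=
    (AddSubmonoid.closure_le).mpr h
  exact hle hx

theorem cone_nonneg {S : List (Fin 6 → ℤ)} (f : (Fin 6 → ℤ) →+ ℤ)
    (h : ∀ g ∈ S, 0 ≤ f g) {x : Fin 6 → ℤ} (hx : x ∈ cone S) : 0 ≤ f x := by
  obtain ⟨d, hd, hx⟩ := hx
  have hle : AddSubmonoid.closure {y | y ∈ S} ≤ (AddSubmonoid.nonneg ℤ).comap f :=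
    (AddSubmonoid.closure_le).mpr h
  have h1 : 0 ≤ f (d • x) := hle hx
  rw [map_nsmul, nsmul_eq_mul] at h1
  exact nonneg_of_mul_nonneg_right h1 (by exact_mod_cast hd)

/-- Integer vectors as six-tuples, convenient for computation. -/
structure V6 where
  a : ℤ
  b : ℤ
  c : ℤ
  d : ℤ
  e : ℤ
  f : ℤ

namespace V6

/-- The associated column vector. -/
def toV (x : V6) : Fin 6 → ℤ := ![x.a, x.b, x.c, x.d, x.e, x.f]

/-- A linear combination `k x + y`. -/
def lin (k : ℤ) (x y : V6) : V6 :=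
  ⟨Int.add (Int.mul k x.a) y.a, Int.add (Int.mul k x.b) y.b, Int.add (Int.mul k x.c) y.c,
    Int.add (Int.mul k x.d) y.d, Int.add (Int.mul k x.e) y.e, Int.add (Int.mul k x.f) y.f⟩

theorem toV_lin (k : ℤ) (x y : V6) : (lin k x y).toV = k • x.toV + y.toV := by
  have h1 : ∀ p q : ℤ, Int.add p q = p + q := fun _ _ => rfl
  have h2 : ∀ p q : ℤ, Int.mul p q = p * q := fun _ _ => rfl
  ext i
  fin_cases i <;> simp [lin, toV, h1, h2]

/-- The zero tuple. -/
def zero : V6 := ⟨0, 0, 0, 0, 0, 0⟩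

theorem toV_zero : zero.toV = 0 := by
  ext i
  fin_cases i <;> rfl

/-- Boolean equality of tuples. -/
def eqB (x y : V6) : Bool :=
  decide (x.a = y.a) && decide (x.b = y.b) && decide (x.c = y.c) && decide (x.d = y.d) &&
    decide (x.e = y.e) && decide (x.f = y.f)

theorem eq_of_eqB {x y : V6} (h : eqB x y = true) : x = y := by
  cases x
  cases y
  simpa [eqB, and_assoc] using h

/-- Entry of a list, with default value zero. -/
def nth : List V6 → ℕ → V6
  | [], _ => zero
  | x :: _, 0 => x
  | _ :: l, n + 1 => nth l n

theorem nth_mem (S : List V6) (n : ℕ) : (nth S n).toV ∈ cone (S.map toV) := by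
  have key : nth S n = zero ∨ nth S n ∈ S := by
    induction S generalizing n with
    | nil => exact Or.inl rfl
    | cons x l ih =>
      cases n with
      | zero => exact Or.inr List.mem_cons_self
      | succ n => exact (ih n).imp_right (List.mem_cons_of_mem x)
  rcases key with h | h
  · rw [h, toV_zero]
    exact zero_mem _
  · exact mem_cone_of_mem (List.mem_map_of_mem h)

/-- The vector described by a list of coefficients and indices. -/
def comb (S : List V6) : List (ℕ × ℕ) → V6
  | [] => zero
  | q :: l => lin (Int.ofNat q.1) (nth S q.2) (comb S l)

theorem comb_mem (S : List V6) (l : List (ℕ × ℕ)) : (comb S l).toV ∈ cone (S.map toV) := by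
  induction l with
  | nil =>
    rw [comb, toV_zero]
    exact zero_mem _
  | cons q l ih =>
    rw [comb, toV_lin]
    refine add_mem ?_ ih
    rw [Int.ofNat_eq_natCast, natCast_zsmul]
    exact AddSubmonoid.nsmul_mem _ (nth_mem S q.2) _

/-- Checking a list of certificates that `F` maps the cone of `S` into the cone of `S'`. -/
def chk (F : V6 → V6) (S' : List V6) : List V6 → List (ℕ × List (ℕ × ℕ)) → Bool
  | [], _ => true
  | _ :: _, [] => false
  | g :: S, p :: C => Nat.blt 0 p.1 &&
      eqB (lin (Int.ofNat p.1) (F g) zero) (comb S' p.2) && chk F S' S C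

end V6

/-- The matrix `M` maps the cone of `S` into the cone of `T`. -/
def Maps (M : Matrix (Fin 6) (Fin 6) ℤ) (S T : List (Fin 6 → ℤ)) : Prop :=
  ∀ x ∈ cone S, M *ᵥ x ∈ cone T

open V6 in
theorem maps_of_chk {M : Matrix (Fin 6) (Fin 6) ℤ} {F : V6 → V6}
    (hF : ∀ x : V6, (F x).toV = M *ᵥ x.toV) {S T : List V6}
    {C : List (ℕ × List (ℕ × ℕ))} (h : chk F T S C = true) :
    Maps M (S.map toV) (T.map toV) := by
  intro x hx
  refine cone_map (S := S.map toV) (S' := T.map toV) M.mulVecLin.toAddMonoidHom ?_ hx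
  intro y hy
  obtain ⟨g, hg, rfl⟩ := List.mem_map.mp hy
  change M *ᵥ g.toV ∈ _
  rw [← hF]
  clear hx hy
  induction S generalizing C with
  | nil => simp at hg
  | cons g' S ih =>
    cases C with
    | nil => simp [chk] at h
    | cons p C =>
      rw [chk, Bool.and_eq_true, Bool.and_eq_true] at h
      obtain ⟨⟨h1, h2⟩, h3⟩ := h
      rcases List.mem_cons.mp hg with rfl | hg
      · have h4 := congrArg toV (eq_of_eqB h2)
        rw [toV_lin, toV_zero, add_zero, Int.ofNat_eq_natCast, natCast_zsmul] at h4
        refine mem_cone_of_nsmul (d := p.1) ?_ ?_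
        · rw [Nat.blt_eq] at h1
          exact h1
        · rw [h4]
          exact comb_mem T p.2
      · exact ih h3 hg

/-- Generators of the cone for `t`. -/
def gK6 : List V6 := [
  ⟨11, -4, 34, -4, 11, 0⟩, ⟨12, -9, 44, -14, 16, -1⟩, ⟨1115, -355, 3238, -462, 927, -47⟩,
  ⟨8884, -9367, 28780, -10490, 9192, -551⟩, ⟨3993, -4278, 14422, -5002, 4781, -284⟩,
  ⟨497, -257, 802, -186, 109, -5⟩, ⟨6780, -7509, 22900, -8158, 7400, -437⟩,
  ⟨1134, -733, 3984, -918, 1354, -69⟩, ⟨2478, -1577, 9008, -2222, 3210, -193⟩,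
  ⟨1376, -1361, 4356, -1718, 1316, -81⟩, ⟨1458, -1563, 5110, -1768, 1712, -101⟩,
  ⟨547, -559, 2044, -704, 681, -41⟩, ⟨1418, -59, 4224, -26, 1262, -51⟩,
  ⟨6648, -6867, 21116, -7778, 6628, -403⟩, ⟨2146, -2317, 7694, -2676, 2552, -151⟩,
  ⟨169, 29, 602, -6, 269, -7⟩, ⟨1452, -1413, 4388, -1550, 1288, -85⟩,
  ⟨2643, -2905, 8238, -2978, 2543, -149⟩, ⟨315, 181, 1334, -14, 687, -7⟩,
  ⟨3940, -3607, 11532, -3898, 3352, -231⟩, ⟨2145, -2412, 7630, -2734, 2525, -146⟩,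
  ⟨1730, -1721, 6442, -2196, 2164, -131⟩, ⟨993, -891, 3746, -1286, 1309, -79⟩,
  ⟨4599, -4310, 13938, -4624, 4447, -274⟩, ⟨19132, -21183, 68124, -24058, 22224, -1311⟩]

/-- The same generators as column vectors. -/
def gK : List (Fin 6 → ℤ) := gK6.map V6.toV

/-- Generators of the first cone for `r`. -/
def gE6 : List V6 := [
  ⟨10, -8, 27, -11, 7, -1⟩, ⟨4155, -2222, 13546, -3040, 4579, -362⟩,
  ⟨835, -807, 2934, -1054, 1047, -75⟩, ⟨82708, -54422, 228543, -77633, 59497, -7981⟩,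
  ⟨864, -783, 2868, -1018, 980, -79⟩, ⟨2715, -1787, 7502, -2549, 1953, -262⟩,
  ⟨1214, -880, 3309, -1237, 857, -119⟩, ⟨3415, -1435, 10942, -2126, 3723, -311⟩,
  ⟨27652, -18578, 76191, -26417, 19813, -2677⟩, ⟨1764, -837, 5628, -1126, 1880, -157⟩,
  ⟨3509, -1594, 11254, -2320, 3917, -318⟩, ⟨9049, -4210, 28366, -6056, 9633, -830⟩,
  ⟨1788, -801, 5732, -1158, 1944, -161⟩, ⟨4744, -2041, 14734, -2964, 4874, -435⟩,
  ⟨2586, -885, 7864, -1142, 2518, -237⟩, ⟨11819, -5548, 34594, -7508, 9643, -1096⟩,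
  ⟨32641, -17511, 93386, -24942, 24805, -3067⟩, ⟨67366, -39851, 189208, -57658, 49370, -6403⟩,
  ⟨114069, -72756, 316174, -104956, 82085, -10952⟩,
  ⟨169151, -113849, 465158, -162626, 120779, -16373⟩,
  ⟨231578, -161077, 634648, -227862, 164982, -22541⟩, ⟨2835, -1091, 8758, -1406, 2871, -255⟩,
  ⟨7088, -2853, 21644, -3774, 7004, -645⟩, ⟨3371, -1678, 10746, -2400, 3459, -298⟩,
  ⟨10465, -4936, 31798, -7028, 9777, -956⟩, ⟨9106, -3859, 28096, -5506, 9286, -835⟩]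

/-- The same generators as column vectors. -/
def gE : List (Fin 6 → ℤ) := gE6.map V6.toV

/-- Generators of the second cone for `r`. -/
def gF6 : List V6 := [
  ⟨10, -8, 27, -11, 7, -1⟩, ⟨41, -52, 182, -92, 73, -8⟩, ⟨302, -615, 1000, -690, 290, -47⟩,
  ⟨1972, -1862, 5247, -2465, 1369, -205⟩, ⟨1, -5, 10, -10, 5, -1⟩,
  ⟨1270, -1232, 3375, -1619, 883, -133⟩, ⟨6945, -30024, 52670, -46028, 20425, -3652⟩,
  ⟨181, -790, 1380, -1210, 535, -96⟩, ⟨1325, -2879, 5650, -4238, 1937, -355⟩,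
  ⟨5287, -10365, 17318, -12154, 5091, -857⟩, ⟨4043, -13547, 21486, -17006, 7415, -1239⟩,
  ⟨6077, -21553, 33050, -27002, 11401, -1973⟩, ⟨609, -1016, 1862, -1188, 545, -92⟩,
  ⟨131, -188, 594, -308, 227, -24⟩, ⟨890, -1773, 2872, -1958, 822, -133⟩,
  ⟨4679, -6945, 12886, -7954, 3571, -573⟩, ⟨14397, -17764, 38142, -21628, 10317, -1624⟩,
  ⟨32070, -34931, 84472, -44458, 22426, -3467⟩, ⟨57465, -57599, 151930, -75294, 39869, -6067⟩,
  ⟨88963, -84732, 236466, -112212, 61699, -9272⟩, ⟨3904, -3590, 10401, -4787, 2707, -403⟩,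
  ⟨5326, -9691, 15832, -11210, 4914, -899⟩, ⟨33473, -53711, 98874, -63470, 28277, -4563⟩,
  ⟨182980, -177974, 486243, -233693, 127261, -19177⟩,
  ⟨14348, -12626, 38347, -17021, 9953, -1465⟩, ⟨7178, -25093, 41976, -33494, 14950, -2493⟩,
  ⟨12327, -47115, 75406, -62862, 26955, -4711⟩, ⟨6555, -17049, 23990, -18578, 7375, -1237⟩,
  ⟨54413, -87712, 154670, -99548, 43549, -7052⟩,
  ⟨198458, -262287, 534520, -313362, 146006, -23159⟩, ⟨245, -607, 1074, -734, 361, -51⟩,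
  ⟨2299, -4080, 6850, -4540, 1947, -316⟩, ⟨9878, -13761, 26816, -16126, 7378, -1177⟩,
  ⟨27467, -32833, 72798, -40466, 19591, -3069⟩, ⟨58309, -62832, 154030, -80212, 40821, -6292⟩,
  ⟨6296, -19153, 28172, -22342, 9236, -1585⟩,
  ⟨87397, -333748, 527662, -435428, 187461, -32816⟩, ⟨923, -3529, 5576, -4604, 1981, -347⟩,
  ⟨3715, -11888, 17698, -14156, 5875, -1004⟩, ⟨3421, -7330, 11686, -8560, 3541, -598⟩,
  ⟨997, -3868, 6414, -5332, 2341, -408⟩, ⟨2072, -8269, 13514, -11378, 4930, -869⟩,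
  ⟨42275, -127974, 187458, -154520, 63843, -10938⟩, ⟨1873, -5673, 8306, -6850, 2829, -485⟩,
  ⟨1402, -3643, 5856, -4234, 1918, -291⟩, ⟨5711, -17307, 25006, -20174, 8163, -1399⟩,
  ⟨1281, -4176, 7438, -5692, 2681, -428⟩, ⟨1197, -4715, 7628, -6384, 2759, -485⟩,
  ⟨169, -800, 1510, -1420, 665, -124⟩, ⟨643, -1740, 2826, -2092, 939, -144⟩,
  ⟨2029, -6257, 9130, -7402, 3017, -517⟩, ⟨318, -1043, 1592, -1274, 546, -91⟩,
  ⟨9775, -32299, 48174, -39214, 16387, -2823⟩, ⟨267, -1116, 1970, -1700, 763, -136⟩,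
  ⟨537, -2347, 4108, -3612, 1603, -289⟩, ⟨519, -1512, 2786, -2012, 991, -148⟩,
  ⟨1406, -5419, 8630, -7166, 3088, -539⟩, ⟨8035, -25811, 38134, -31030, 12887, -2215⟩]

/-- The same generators as column vectors. -/
def gF : List (Fin 6 → ℤ) := gF6.map V6.toV

/-- Membership certificates. -/
def cKE : List (ℕ × List (ℕ × ℕ)) := [
  (29457299, [(124242, 1), (75945, 7), (81158, 11), (19627, 15), (49061, 23), (181968, 25)]),
  (111492, [(21230, 0), (110, 6), (30, 11), (435, 14), (405, 22), (828, 25)]),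
  (310221551, [(11675916, 1), (3662890, 11), (2481383, 18), (543943, 19), (168090586, 23), (127728072, 25)]),
  (268624276, [(770424834, 2), (1951418168, 7), (598562754, 11), (1376542597, 14), (1084288, 16), (3996113, 20)]),
  (8527558320, [(1479706552, 2), (35477937625, 7), (2577891819, 14), (819012981, 15), (48462506, 20), (14962501104, 25)]),
  (1, [(1, 4)]),
  (32487870, [(46302188, 2), (287877166, 7), (21428136, 11), (94367257, 14), (556535, 20), (14774158, 22)]),
  (1981857, [(126846, 1), (907280, 7), (301680, 14), (168417, 15), (354586, 24), (1125504, 25)]),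
  (15854856, [(832434, 1), (3918347, 7), (20090427, 14), (3623979, 15), (5280574, 24), (20637936, 25)]),
  (1, [(1, 11)]),
  (519805920, [(68230946, 2), (1002818812, 7), (59063802, 11), (329355199, 14), (2110895, 20), (129069076, 22)]),
  (1, [(1, 13)]), (1, [(1, 24)]),
  (190979004, [(403162770, 2), (166294528, 6), (865493316, 7), (381634350, 11), (615207091, 14), (987815, 20)]),
  (25582674960, [(4889409268, 2), (59382253285, 7), (9365901321, 14), (1142582349, 15), (85291124, 20), (21413126256, 25)]),
  (59931, [(3540, 2), (9671, 14), (2212, 15), (12320, 21), (7122, 22), (928, 24)]),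
  (42457840, [(19382990, 2), (46065349, 7), (13586906, 11), (8894445, 14), (1019233, 15), (121998, 20)]),
  (117819, [(3636692, 0), (153687, 2), (91124, 6), (381630, 7), (15375, 11), (155394, 14)]),
  (1, [(1, 22)]),
  (10614460, [(17887770, 2), (29308932, 7), (5844218, 11), (9666885, 14), (1066644, 15), (93189, 20)]),
  (2878928880, [(916635104, 2), (7251747884, 7), (131760756, 11), (1841704863, 14), (11165605, 20), (1947045648, 25)]),
  (15080596720, [(3006855940, 7), (34018186208, 13), (198645975, 14), (301162180, 15), (3181805, 20), (5507958288, 25)]),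
  (1, [(1, 25)]),
  (42457840, [(125669010, 2), (142247883, 7), (14835142, 11), (169314035, 14), (3745231, 15), (390386, 20)]),
  (1065944790, [(1510500236, 2), (24250659185, 7), (1474363032, 14), (255782463, 15), (35906413, 20), (7437682272, 25)])]

/-- Membership certificates. -/
def cKF : List (ℕ × List (ℕ × ℕ)) := [

  (15624148282324875, [(105911860992, 23), (40018158249962, 27), (5099525084913, 28), (1323150130595, 29), (1539882903708, 36), (292065775351, 42)]),
  (1, [(1, 4)]), (1, [(1, 39)]), (1, [(1, 52)]), (1, [(1, 41)]),
  (18157556827632248, [(52097233215631, 21), (3277005334816, 23), (161825418131328, 24), (2375057987987, 25), (6195088647633836, 27), (293809714692, 36)]),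
  (1, [(1, 11)]),
  (3597944286954, [(61409553822, 6), (208782772295, 8), (745021870453, 9), (6889326458, 19), (91436865748, 21), (8114340952, 36)]),
  (1, [(1, 8)]), (1, [(1, 43)]), (1, [(1, 37)]), (1, [(1, 7)]), (1, [(1, 9)]), (1, [(1, 57)]),
  (1, [(1, 47)]), (1, [(1, 12)]), (1, [(1, 50)]), (1, [(1, 38)]),
  (23634973, [(687938064, 0), (27604461, 1), (1183236, 15), (4025358, 21), (176560, 24), (509172, 31)]),
  (1, [(1, 45)]), (1, [(1, 56)]), (1, [(1, 54)]), (1, [(1, 48)]), (1, [(1, 35)]), (1, [(1, 26)])]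

/-- Membership certificates. -/
def cEE : List (ℕ × List (ℕ × ℕ)) := [
  (1, [(1, 0)]),
  (110993915, [(133929626, 7), (104539698, 14), (94234619, 15), (755659, 20), (95026574, 22), (22907472, 25)]),
  (129951480, [(21198362, 2), (43397044, 7), (21500874, 11), (151952503, 14), (289655, 20), (3266812, 22)]),
  (2, [(1, 0), (2, 3), (61, 6)]),
  (47744751, [(10743405, 2), (2462528, 6), (14880969, 7), (3688695, 11), (52314764, 14), (131842, 20)]),
  (1464, [(599, 0), (48, 3), (1463, 6)]), (1, [(24, 0), (1, 6)]),
  (3416686545, [(257772338, 2), (3178257251, 14), (3063827184, 15), (11674944, 20), (1914909380, 22), (857450256, 25)]),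
  (244, [(24731, 0), (64, 3), (3191, 6)]),
  (205251960, [(2046172, 2), (80988893, 7), (75895898, 14), (94468413, 15), (451423, 20), (55015652, 22)]),
  (177288650, [(76727086, 2), (16709534, 11), (376334999, 14), (146559366, 15), (757221, 20), (108000736, 22)]),
  (540523406, [(928240845, 4), (2953090512, 14), (1076419472, 15), (3852926, 18), (5986620, 20), (596813243, 22)]),
  (6833373090, [(648662836, 2), (3592023907, 14), (3103833438, 15), (10997223, 20), (1597078990, 22), (1321285872, 25)]),
  (36950273232, [(12422585936, 2), (61718631219, 14), (41052229816, 15), (378823976, 18), (157536677, 20), (23881008920, 22)]),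
  (1, [(1, 15)]), (1, [(1, 16)]), (1, [(1, 17)]), (1, [(1, 18)]), (1, [(1, 19)]), (1, [(1, 20)]),
  (61, [(35088, 0), (32, 3), (12240, 6), (61, 15)]),
  (87935362, [(5234346, 1), (9334468, 2), (12851359, 7), (61438484, 14), (86271969, 15), (98249, 20)]),
  (17728865, [(7900197, 2), (1299253, 11), (24497448, 14), (40835757, 15), (73177, 20), (2604652, 22)]),
  (21689211544, [(1697013735, 14), (13858978672, 15), (559232042, 17), (7712031, 20), (5494771772, 22), (15990793008, 25)]),
  (3256312216, [(1054778087, 14), (6649340291, 15), (7803613, 17), (198165111, 18), (1842688798, 22), (2649452928, 25)]),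
  (31700616, [(17797254, 2), (2423837, 4), (113737251, 14), (73176524, 15), (529072, 20), (58598220, 21)])]

/-- Membership certificates. -/
def cFF : List (ℕ × List (ℕ × ℕ)) := [
  (1, [(1, 0)]), (1, [(1, 2)]),
  (292350815, [(44323007, 14), (96896303, 15), (898949, 21), (49664, 24), (1226522, 31), (585532, 44)]),
  (22801, [(40956, 0), (151, 23), (2400, 24)]),
  (1292127971432, [(5336435885, 9), (34060831639, 14), (50417107, 19), (1374016558, 27), (16307544, 36), (3833640174, 44)]),
  (401598, [(6733, 20), (2615, 23), (16824, 24)]),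
  (3405205759349, [(379721940250863, 14), (4406104429911, 21), (3975414054432, 24), (24208086547359, 27), (2615704417049, 28), (136071843984, 36)]),
  (136208230373960, [(397346079122769, 14), (4662697690763, 21), (4218763696896, 24), (25681768019002, 27), (2767509531680, 28), (142555300982, 36)]),
  (3725288513, [(816579566, 9), (3306809597, 14), (96715775, 18), (171696382, 19), (4530882016, 27), (97587278, 28)]),
  (13588165303, [(4217761875, 9), (732628002, 19), (10021863, 21), (1898319068, 27), (4959994998, 28), (26937786472, 31)]),
  (73883662, [(1679983818, 14), (49371607, 21), (35580076, 27), (22047260, 28), (685600338, 31), (83458155, 44)]),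
  (73883662, [(3018416274, 14), (88603777, 21), (64888500, 27), (46303714, 28), (706648036, 31), (148798273, 44)]),
  (4880358296168, [(103530438170, 22), (11644780672, 23), (26441981019, 25), (21327154592, 27), (164317657702, 28), (68705752625, 44)]),
  (1, [(1, 14)]), (1, [(1, 15)]), (1, [(1, 16)]), (1, [(1, 17)]), (1, [(1, 18)]), (1, [(1, 19)]),
  (1, [(1, 14), (32, 20)]), (22801, [(340842, 0), (151, 23), (6024, 24)]), (1, [(1, 22)]),
  (6232413445541, [(104726047979376, 14), (1274339487346, 21), (4662775656878, 28), (1402660298882, 29), (3630620042761, 34), (28089716172, 36)]),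
  (1, [(1, 23), (6, 24)]), (1, [(302, 0), (1, 24)]),
  (36941831, [(2841856146, 14), (68587064, 21), (32935796, 27), (20704776, 28), (287754905, 31), (105080827, 44)]),
  (40947852206, [(5942863853658, 14), (144403910215, 21), (11624573760, 24), (145476249312, 27), (62301763942, 28), (208379061607, 44)]),
  (1, [(1, 28)]), (1, [(1, 29)]),
  (81490098, [(31234697, 9), (213477296, 14), (381178122, 15), (682847438, 17), (12195922, 29), (542100359, 33)]),
  (1, [(1, 31)]), (1, [(1, 32)]), (1, [(1, 33)]), (1, [(1, 34)]),
  (68395677807, [(18492664792, 15), (94960506466, 18), (2842716102, 19), (204964009, 21), (6595892832, 23), (845862492, 28)]),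
  (36941831, [(558959586, 14), (19733363, 21), (20193158, 27), (30287936, 28), (218676827, 31), (40349824, 44)]),
  (73883662, [(69437752822, 14), (1858452305, 21), (1354911098, 27), (789302038, 28), (3557599716, 31), (3232522709, 44)]),
  (295534648, [(2940877038, 14), (78727449, 21), (57412238, 27), (33510076, 28), (146165470, 31), (136922219, 44)]),
  (36941831, [(401383416, 14), (14883311, 21), (11827532, 27), (13599556, 28), (271771060, 31), (26007586, 44)]),
  (997297130873, [(231984573651, 9), (1485371458953, 14), (16370963961, 18), (10980182160, 23), (176264113178, 27), (315396137106, 28)]),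
  (40947852206, [(387995882574, 14), (8266501903, 21), (4751763648, 24), (32183498386, 27), (4982286290, 28), (6895224375, 44)]),
  (163791408824, [(3195368269476, 14), (69008175665, 21), (43053558976, 24), (288051445260, 27), (43272296248, 28), (50634409879, 44)]),
  (58104751635521, [(8889563829255912, 14), (37308868409100, 21), (678419876912, 23), (225938082642563, 27), (402065021770004, 28), (5819066009559, 36)]),
  (58104751635521, [(394177459091088, 14), (1630632555001, 21), (29178184960, 23), (9982029690675, 27), (17842210222329, 28), (260132928081, 36)]),
  (2210480489, [(11470440, 21), (38873730, 27), (186361924, 28), (8175643583, 31), (1095532, 42), (29364539, 44)]),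
  (73883662, [(1214915646, 14), (32849125, 21), (26750552, 27), (60342366, 28), (162130808, 31), (48360149, 44)]),
  (73883662, [(1002345252, 14), (22419309, 21), (10984818, 27), (5248448, 28), (122916342, 31), (35362863, 44)]),
  (245687113236, [(3220597940562, 14), (76137320020, 21), (19861370880, 24), (160746995845, 27), (37418491071, 28), (96392290535, 44)]),
  (21404828843840, [(1038957563171, 9), (86480094371119, 14), (120894678598, 19), (5726070427279, 27), (116686875801, 29), (69481208868, 36)]),
  (73883662, [(90964602, 14), (1995725, 21), (135746, 27), (2677148, 28), (114270610, 31), (1633673, 44)]),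
  (36941831, [(291671814, 14), (7126367, 21), (5604316, 27), (11178604, 28), (3755701, 31), (10252257, 44)]),
  (36941831, [(54518472, 14), (1381816, 21), (1618216, 27), (1399600, 28), (13367867, 31), (2206539, 44)]),
  (73883662, [(3872986338, 14), (99166525, 21), (102023224, 27), (109361350, 28), (65443536, 31), (170926273, 44)]),
  (3405205759349, [(13132627350261, 14), (141373641918, 21), (152602724832, 24), (945798037134, 27), (106178538686, 28), (5149235676, 36)]),
  (68104115186980, [(596285067648063, 14), (6263452484366, 21), (6105587979232, 24), (37867132158659, 27), (4389424784355, 28), (251516397314, 36)]),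
  (1197558, [(202416, 13), (3993552, 14), (88009, 21), (55348, 27), (1999656, 31), (43349, 44)]),
  (163791408824, [(2793430416852, 14), (70051896145, 21), (488882176, 24), (49707808820, 27), (29905074016, 28), (114193430159, 44)]),
  (20473926103, [(577245987804, 14), (13345593392, 21), (4043993344, 24), (41501233467, 27), (25979944258, 28), (17511221545, 44)])]

/-- Membership certificates. -/
def cEK : List (ℕ × List (ℕ × ℕ)) := [
  (152436000, [(1183827, 2), (1372683, 5), (50774, 8), (172422, 9), (18496, 18), (835920, 22)]),
  (10283205, [(17253301, 5), (569287, 9), (23149397, 12), (688733, 13), (27245042, 18), (1480738, 24)]),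
  (357562, [(6696600, 0), (131943, 5), (24416, 9), (29890, 12), (224175, 18), (16084, 24)]),
  (76218000, [(6724221063, 2), (3416914752, 5), (206540656, 8), (832771368, 9), (140042849, 18), (2112351480, 22)]),
  (357562, [(3320048, 0), (176162, 5), (45612, 9), (63629, 12), (209046, 18), (14465, 24)]),
  (152436000, [(441299091, 2), (224521239, 5), (13564642, 8), (54674226, 9), (9190268, 18), (138780360, 22)]),
  (903600, [(638572, 1), (1023915, 2), (858540, 5), (49980, 9), (5145, 18), (637832, 22)]),
  (23595921, [(970340, 8), (50710197, 12), (4598124, 13), (52642702, 18), (8096370, 19), (1726392, 23)]),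
  (152436000, [(4378777617, 2), (2510383593, 5), (105679754, 8), (465118362, 9), (76334416, 18), (1659640320, 22)]),
  (11733070, [(420541, 5), (13815804, 12), (1557514, 13), (1234018, 17), (10677971, 18), (909090, 23)]),
  (140129, [(12421, 5), (286774, 12), (26384, 13), (348909, 18), (28746, 19), (37073, 23)]),
  (14853674, [(2702329, 5), (73337798, 12), (2478892, 13), (98553543, 18), (25287712, 19), (3811972, 23)]),
  (675167, [(16779, 5), (763280, 12), (98574, 13), (755698, 18), (75136, 19), (26712, 23)]),
  (57657648, [(46609587, 5), (16987187, 8), (48378802, 9), (171281243, 12), (126937849, 18), (29295294, 23)]),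
  (428763, [(23395, 8), (805770, 12), (941358, 15), (157532, 18), (101154, 19), (91053, 23)]),
  (3637911, [(28173348, 2), (958819, 8), (7994928, 9), (19556097, 12), (1785632, 18), (2994531, 23)]),
  (191469, [(7659306, 2), (100141, 8), (1206570, 9), (654012, 12), (221714, 18), (274752, 23)]),
  (3050085, [(252858504, 2), (44612691, 5), (14236303, 8), (54571494, 9), (7854107, 18), (727755, 23)]),
  (4763625, [(609986391, 2), (288530814, 5), (2131867, 8), (41726526, 9), (6218168, 18), (230688360, 22)]),
  (1506, [(516040, 1), (265473, 2), (161181, 5), (18126, 9), (3084, 18), (118592, 22)]),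
  (4763625, [(1084630677, 2), (771024708, 5), (14726974, 8), (75557022, 9), (15280046, 18), (550312920, 22)]),
  (818517, [(14146, 6), (20287, 8), (1709926, 12), (82348, 15), (866888, 18), (382386, 23)]),
  (327093, [(113046, 5), (61739, 8), (1590816, 12), (977245, 18), (180195, 19), (251448, 23)]),
  (3235621, [(1417, 5), (4162626, 9), (7348612, 12), (1149276, 17), (4898583, 18), (170525, 23)]),
  (3603603, [(8013927, 5), (2456876, 8), (13387518, 9), (25079496, 12), (10274683, 18), (1808145, 23)]),
  (54951624, [(22994409, 5), (11497529, 8), (294421464, 12), (315941800, 18), (101338332, 19), (10636383, 23)])]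

/-- Membership certificates. -/
def cEUK : List (ℕ × List (ℕ × ℕ)) := [
  (152436000, [(1183827, 2), (1372683, 5), (50774, 8), (172422, 9), (18496, 18), (835920, 22)]),
  (174956595, [(65589595, 3), (9109016, 4), (78006426, 8), (14040011, 19), (4048608, 22), (21858165, 23)]),
  (3532, [(122, 2), (225, 5), (1199, 8), (278, 9), (77, 12), (27, 18)]),
  (76218000, [(2428010439, 2), (5645936256, 5), (1071689968, 8), (2771176104, 9), (352307297, 18), (407368440, 22)]),
  (6467631, [(603747, 5), (1723020, 8), (1196518, 9), (758415, 12), (140431, 19), (26805, 23)]),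
  (50812000, [(53207839, 2), (123554731, 5), (23429018, 8), (60587754, 9), (7702372, 18), (8998440, 22)]),
  (152436000, [(109285629, 2), (179739141, 5), (12403498, 8), (34771194, 9), (3761792, 18), (86937840, 22)]),
  (11802516, [(4972630, 3), (758628, 8), (1698700, 9), (1107803, 12), (1212814, 18), (443681, 24)]),
  (152436000, [(1804210221, 2), (3846157509, 5), (624133202, 8), (1626735906, 9), (203537008, 18), (637904160, 22)]),
  (54326556, [(6833623, 3), (1717606, 8), (3093719, 12), (206243, 19), (8049966, 23), (1541825, 24)]),
  (59012580, [(16513342, 3), (6617240, 8), (14778796, 9), (8394491, 12), (1093166, 18), (5154209, 24)]),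
  (43195670, [(4205703, 8), (17514982, 9), (35244900, 12), (49404996, 13), (4458604, 18), (9064133, 24)]),
  (43174297, [(2201009, 8), (1171248, 12), (8703090, 13), (2944471, 18), (3188507, 23), (1575077, 24)]),
  (102187320, [(58122789, 3), (63644782, 9), (45675122, 12), (12121575, 17), (406917, 18), (2389173, 24)]),
  (22383785, [(359331, 8), (1758479, 12), (3453634, 13), (23295206, 17), (618976, 18), (212655, 24)]),
  (3235621, [(13827413, 5), (12821564, 9), (3361385, 12), (1980297, 17), (2421005, 18), (7135456, 23)]),
  (15460240, [(6966664, 3), (573718959, 5), (105369579, 8), (157487766, 9), (38442617, 18), (5604419, 24)]),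
  (9747600, [(679415343, 5), (140843723, 8), (349196358, 9), (58120236, 12), (38641585, 18), (239847, 24)]),
  (1587875, [(60465861, 2), (177657194, 5), (28652007, 8), (71174446, 9), (9732978, 18), (29077560, 22)]),
  (4763625, [(362676621, 2), (784709859, 5), (90604252, 8), (240317556, 9), (29153333, 18), (251507160, 22)]),
  (12703, [(1493100, 2), (2711552, 5), (328397, 8), (900386, 9), (102560, 18), (830064, 22)]),
  (705723, [(432472, 5), (354233, 6), (6262, 12), (34491, 17), (26669, 19), (41526, 23)]),
  (1956650, [(140678, 8), (892139, 12), (1270316, 13), (3446590, 17), (127716, 19), (102523, 24)]),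
  (3609294, [(400251, 3), (717106, 8), (2556852, 9), (974870, 18), (567465, 19), (1356264, 23)]),
  (2698843, [(2141941, 5), (7078536, 9), (2867034, 12), (2333418, 13), (1057275, 18), (3292101, 23)]),
  (227242200, [(99835874, 9), (177426126, 12), (267754898, 13), (179979639, 17), (24086317, 18), (28772696, 24)])]

/-- Membership certificates. -/
def cFK : List (ℕ × List (ℕ × ℕ)) := [
  (152436000, [(1183827, 2), (1372683, 5), (50774, 8), (172422, 9), (18496, 18), (835920, 22)]),
  (30476875, [(331003, 8), (1028262, 9), (198498, 12), (1414127, 18), (76752, 21), (842600, 22)]),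
  (5478534, [(347902, 9), (264543, 12), (188706, 13), (716760, 17), (5224, 19), (24231, 24)]),
  (76218000, [(71532249, 2), (149772246, 5), (21902188, 8), (57313764, 9), (7062677, 18), (32846040, 22)]),
  (1, [(1, 1)]),
  (76218000, [(40760646, 2), (94209459, 5), (17688802, 8), (45761706, 9), (5811533, 18), (7454160, 22)]),
  (170297325, [(4616673792, 11), (3323320, 12), (19844055, 18), (4186105, 19), (587730420, 21), (4485748512, 22)]),
  (913, [(598, 11), (105, 21), (625, 22)]), (1, [(1, 8), (2, 9)]),
  (182806, [(148372, 3), (369246, 9), (168571, 12), (84019, 17), (24842, 19), (66235, 23)]),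
  (97169655, [(10670909, 3), (8495327, 9), (5233102, 12), (41357612, 18), (345220560, 21), (51903223, 24)]),
  (87733, [(10700, 4), (52490, 6), (100356, 20), (604248, 21), (40665, 24)]),
  (6830694, [(100356, 8), (2013122, 9), (908397, 12), (385611, 17), (42902, 19), (1212765, 23)]),
  (92860, [(268740, 0), (3325, 2), (3920, 9), (14504, 11), (9275, 18), (13864, 22)]),
  (5599173, [(1792785, 5), (543730, 12), (598240, 13), (1535940, 17), (10676, 18), (181522, 24)]),
  (19413726, [(40660398, 5), (39811138, 9), (11737007, 12), (7727191, 17), (6802020, 18), (21527401, 23)]),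
  (4638072, [(1475368, 3), (90024501, 5), (16345289, 8), (23456130, 9), (5991035, 18), (894473, 24)]),
  (4873800, [(186597209, 5), (38192149, 8), (90817754, 9), (14053968, 12), (10842055, 18), (339061, 24)]),
  (4763625, [(93539881, 2), (286745149, 5), (53787247, 8), (133851916, 9), (18282688, 18), (21770760, 22)]),
  (4763625, [(195447533, 2), (437823257, 5), (58075171, 8), (152600288, 9), (18874659, 18), (115087680, 22)]),
  (76218000, [(157141338, 2), (302057727, 5), (33290206, 8), (88636518, 9), (10454549, 18), (103065480, 22)]),
  (428487, [(638274, 5), (323009, 8), (360436, 9), (130870, 18), (69046, 19), (998601, 23)]),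
  (3235621, [(21557802, 5), (66049364, 9), (17278700, 12), (11133571, 17), (8187300, 18), (24485125, 23)]),
  (3048720, [(231851058, 2), (540464397, 5), (104489026, 8), (270069498, 9), (34415339, 18), (32697000, 22)]),
  (50812000, [(445600591, 2), (739073239, 5), (51477142, 8), (143982726, 9), (15578768, 18), (355623360, 22)]),
  (230415, [(286317, 9), (3996832, 11), (322581, 18), (386188, 20), (1842244, 21), (66657, 24)]),
  (616275, [(534105, 9), (8719208, 11), (4948460, 20), (12467300, 21), (1858608, 22)]),
  (13424140, [(1695188, 3), (14068827, 6), (2090957, 8), (46520474, 17), (244481, 19), (1626205, 24)]),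
  (6471242, [(119395913, 5), (146109194, 9), (40051883, 12), (63039847, 17), (25050957, 18), (78804505, 23)]),
  (3603603, [(498767103, 5), (51775658, 8), (383315841, 9), (84754329, 12), (60056500, 18), (128386332, 23)]),
  (178781, [(243246, 0), (7416, 5), (7234, 9), (1680, 12), (12600, 18), (6347, 24)]),
  (5866535, [(3889296, 5), (1752489, 12), (2685094, 13), (2718673, 17), (494866, 18), (928330, 23)]),
  (3603603, [(18768024, 5), (415382, 8), (18219744, 9), (4868211, 12), (2983678, 18), (8476161, 23)]),
  (3249200, [(121838229, 5), (22664569, 8), (36803874, 9), (891508, 12), (7911755, 18), (1454141, 24)]),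
  (6498400, [(437618509, 5), (90336449, 8), (227650354, 9), (41278468, 12), (23702355, 18), (422661, 24)]),
  (1, [(1, 23), (1, 24)]),
  (4333095, [(179798280, 4), (98912288, 11), (1059201, 18), (87561500, 20), (558094328, 21), (896247, 24)]),
  (2469, [(1104, 4), (644, 11), (542, 20), (3341, 21)]),
  (18908682, [(2905778, 3), (2810759, 6), (3151447, 8), (1734311, 19), (9222240, 22), (10997345, 24)]),
  (84372, [(76140, 3), (46294, 9), (41499, 12), (549, 17), (5662, 19), (4545, 23)]),
  (9244125, [(451935, 9), (9896464, 11), (616275, 18), (3761560, 20), (18183460, 21), (4983624, 22)]),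
  (4565, [(17322, 11), (4565, 20), (15225, 21), (7542, 22)]),
  (37982880, [(158282085, 3), (363504081, 6), (480120760, 10), (242743088, 20), (1051362720, 22), (8765280, 23)]),
  (194784, [(36825, 3), (84309, 6), (119320, 10), (43376, 20), (239904, 22)]),
  (9468425, [(1321554, 9), (604371, 12), (148958, 13), (4299069, 17), (2732182, 18), (1447541, 24)]),
  (6302894, [(2283965, 3), (7095956, 6), (814599, 19), (5856720, 22), (2904270, 24)]),
  (164020410, [(45036640, 9), (750486752, 11), (3932905, 12), (75966844, 18), (171572552, 21), (9591503, 24)]),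
  (13695, [(17698, 11), (9130, 20), (30925, 21), (6738, 22)]), (1, [(45, 1), (1, 22)]),
  (37873700, [(5885509, 9), (765166, 12), (911993, 13), (2499399, 17), (5766697, 18), (3171436, 24)]),
  (1773989, [(18535, 3), (559877, 19), (4598064, 20), (603408, 22), (44715, 24)]),
  (133675305, [(258426, 3), (5029743, 6), (727547, 8), (2485531, 18), (23325912, 22), (5967582, 24)]),
  (11183621, [(39045816, 4), (19638516, 6), (3022667, 19), (49038960, 22), (5589630, 24)]),
  (1876842210, [(3549786, 3), (720703, 8), (9592311, 12), (22042514, 18), (971762184, 21), (1584951408, 22)]),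
  (1, [(1, 21), (2, 22)]),
  (557653, [(1401109, 0), (58937, 9), (1247016, 11), (9483, 12), (110998, 18), (19352, 24)]),
  (1, [(1, 20), (3, 21)]),
  (11183621, [(17153028, 4), (23593411, 6), (2102628, 19), (45361512, 22), (4211040, 24)])]

/-- Membership certificates. -/
def cFUK : List (ℕ × List (ℕ × ℕ)) := [
  (152436000, [(1183827, 2), (1372683, 5), (50774, 8), (172422, 9), (18496, 18), (835920, 22)]),
  (3345918, [(1230465, 0), (143470, 9), (255864, 11), (52700, 12), (239025, 18), (225, 24)]),
  (6868953, [(849504, 5), (334484, 8), (2204730, 12), (1412800, 18), (230991, 19), (285942, 23)]),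
  (76218000, [(166301601, 2), (100602654, 5), (2818012, 8), (14554836, 9), (2380373, 18), (70455960, 22)]),
  (11578952, [(5250827, 0), (58950, 9), (21375, 12), (97875, 18), (37080, 21), (2168, 22)]),
  (15243600, [(22367532, 2), (11466453, 5), (675134, 8), (2738502, 9), (459961, 18), (7132320, 22)]),
  (1371094, [(20262831, 5), (14415010, 9), (17345486, 12), (1609720, 13), (69613365, 18), (1310202, 24)]),
  (164531280, [(64793688, 5), (44943546, 9), (54745091, 12), (5021594, 13), (219911986, 18), (4176599, 24)]),
  (178781, [(2355635, 0), (236324, 5), (317504, 9), (282075, 12), (595924, 18), (13738, 24)]),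
  (1201201, [(2570592, 5), (790344, 8), (2591936, 9), (7246469, 12), (4329072, 18), (927809, 23)]),
  (11733070, [(5506886, 5), (76501569, 12), (6656624, 13), (6504583, 17), (155041296, 18), (21427255, 23)]),
  (11733070, [(12884644, 5), (124039411, 12), (9790186, 13), (16607847, 17), (251163894, 18), (31316615, 23)]),
  (3235621, [(253344, 5), (1048148, 9), (2207350, 12), (179228, 17), (948288, 18), (239389, 23)]),
  (5901258, [(17704, 3), (206532, 8), (839580, 9), (249879, 12), (1329640, 18), (1493, 24)]),
  (6868953, [(2690418, 5), (1053569, 8), (6526407, 12), (3066043, 18), (275922, 19), (1017273, 23)]),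
  (21621618, [(43836735, 5), (15200549, 8), (50353458, 9), (96621243, 12), (390553, 18), (829380, 23)]),
  (3637911, [(74348220, 2), (1010132, 8), (12228178, 9), (8184473, 12), (2276245, 18), (2900808, 23)]),
  (9150255, [(418530687, 2), (61752573, 5), (20328134, 8), (83863602, 9), (13622791, 18), (3403605, 23)]),
  (4763625, [(341481578, 2), (146450687, 5), (5215336, 8), (33482408, 9), (5204694, 18), (105872880, 22)]),
  (4763625, [(479719081, 2), (291255949, 5), (828897, 8), (23675116, 9), (5181413, 18), (228497760, 22)]),
  (76218000, [(315090258, 2), (220108407, 5), (1483246, 8), (17371638, 9), (2650709, 18), (165748680, 22)]),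
  (178781, [(10949700, 0), (450547, 5), (326908, 9), (1210045, 12), (404459, 18), (51448, 24)]),
  (1201201, [(19402323, 5), (6524433, 8), (21542442, 9), (39049382, 12), (10935543, 18), (1138131, 23)]),
  (76218000, [(16173520494, 2), (8127539601, 5), (522508378, 8), (2069634834, 9), (347671187, 18), (4935711240, 22)]),
  (903600, [(11327212, 1), (12664965, 2), (10474590, 5), (661980, 9), (68145, 18), (7730672, 22)]),
  (2827075, [(8531472, 5), (580659, 8), (32382694, 12), (7815314, 13), (83073076, 18), (5513040, 23)]),
  (16396929, [(430329378, 5), (46346578, 8), (290892477, 12), (946284032, 18), (49037703, 23), (23839482, 24)]),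
  (1637034, [(418646, 6), (3713, 8), (15625886, 12), (19855283, 15), (5412550, 18), (3166245, 23)]),
  (7207206, [(140322732, 5), (52087771, 8), (172347642, 9), (404623449, 12), (38621216, 18), (18994014, 23)]),
  (1212637, [(303679722, 2), (5342744, 8), (54970779, 9), (68922888, 12), (16747554, 18), (17132958, 23)]),
  (172233, [(5054, 8), (45399, 12), (24, 13), (73468, 18), (2634, 19), (15915, 23)]),
  (3603603, [(2634003, 5), (1041797, 8), (2251062, 9), (9007095, 12), (1830313, 18), (985371, 23)]),
  (3637911, [(38385084, 2), (888902, 8), (8599806, 9), (15558141, 12), (2305864, 18), (2919612, 23)]),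
  (3637911, [(155242722, 2), (1631099, 8), (20357880, 9), (5365800, 12), (6126232, 18), (5795661, 23)]),
  (203339, [(16400568, 2), (2987557, 5), (934198, 8), (3466914, 9), (608463, 18), (103157, 23)]),
  (184044, [(9347, 8), (1858893, 12), (720249, 15), (307527, 17), (2295868, 18), (467766, 23)]),
  (7039842, [(226459061, 5), (1116980803, 12), (171889574, 13), (198955807, 17), (2742706257, 18), (200022925, 23)]),
  (9386456, [(3202777, 5), (15752781, 12), (2421004, 13), (2820815, 17), (38680569, 18), (2813739, 23)]),
  (1173307, [(635, 5), (7177791, 12), (4076, 13), (849963, 17), (10957259, 18), (2215116, 23)]),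
  (1201201, [(727654, 5), (256626, 8), (1646346, 9), (5306399, 12), (3485353, 18), (864136, 23)]),
  (2346614, [(1451017, 5), (4270366, 12), (1376092, 13), (235988, 17), (12007119, 18), (213860, 23)]),
  (46932280, [(63872598, 5), (183441977, 12), (57622632, 13), (11972519, 17), (514169058, 18), (9139555, 23)]),
  (8266570, [(7456391, 8), (608240859, 12), (68235304, 13), (51869136, 17), (763225176, 18), (63468870, 23)]),
  (8266570, [(323633, 8), (26981857, 12), (3033522, 13), (2317378, 17), (33850678, 18), (2795610, 23)]),
  (818517, [(24268, 6), (71912, 8), (1467565, 12), (717346, 15), (1559314, 18), (448620, 23)]),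
  (1653314, [(282498, 8), (15492583, 12), (14958, 13), (1570057, 17), (18896082, 18), (4000377, 23)]),
  (3392490, [(2199339, 5), (406558, 8), (6055428, 12), (1809558, 13), (17202287, 18), (744630, 23)]),
  (393526296, [(1152279942, 5), (113498531, 8), (674351178, 12), (2405700712, 18), (94073880, 23), (65740335, 24)]),
  (4290744, [(100983921, 0), (236881, 5), (3369812, 9), (1583426, 12), (6333484, 18), (101315, 24)]),
  (15730614, [(784327, 8), (13007859, 12), (219828, 13), (19631240, 18), (1104312, 19), (3537690, 23)]),
  (12399855, [(355174, 8), (41966181, 12), (1296426, 13), (3294474, 17), (54969224, 18), (10232775, 23)]),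
  (4133285, [(25167, 8), (2177503, 12), (101568, 13), (263977, 17), (3703052, 18), (562165, 23)]),
  (2346614, [(495830, 5), (39728223, 12), (1907750, 13), (5861831, 17), (64298292, 18), (9137039, 23)]),
  (3235621, [(334544, 5), (2047810, 9), (1753329, 12), (900390, 17), (5981211, 18), (25740, 23)]),
  (14120760, [(11518669, 5), (16237042, 9), (14900544, 12), (4182834, 17), (56581255, 18), (708518, 24)]),
  (2621769, [(44399, 8), (1552185, 12), (243615, 13), (4649845, 18), (399450, 19), (282090, 23)]),
  (131175432, [(324530715, 5), (23062711, 8), (282958140, 12), (863116169, 18), (64404276, 23), (20221473, 24)]),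
  (24799710, [(1681087, 8), (342474468, 12), (15093408, 13), (47521947, 17), (507814622, 18), (74535015, 23)])]

def tM : Matrix (Fin 6) (Fin 6) ℤ :=
  !![1, 0, 0, 0, 0, -11;
    0, 1, 0, 0, 0, 4;
    0, 0, 1, 0, 0, -34;
    0, 0, 0, 1, 0, 4;
    0, 0, 0, 0, 1, -11;
    0, 0, 0, 0, 0, 1]

def rM : Matrix (Fin 6) (Fin 6) ℤ :=
  !![0, 0, 0, 0, -11, -67;
    1, 0, 0, 0, 4, 30;
    0, 1, 0, 0, -34, -219;
    0, 0, 1, 0, 4, 44;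
    0, 0, 0, 1, -11, -81;
    0, 0, 0, 0, 1, 6]

def riM : Matrix (Fin 6) (Fin 6) ℤ :=
  !![6, 1, 0, 0, 0, 62;
    -15, 0, 1, 0, 0, -131;
    20, 0, 0, 1, 0, 216;
    -15, 0, 0, 0, 1, -154;
    6, 0, 0, 0, 0, 67;
    -1, 0, 0, 0, 0, -11]

def uM : Matrix (Fin 6) (Fin 6) ℤ :=
  !![0, 0, 0, 0, -1, -17;
    0, 0, 0, -1, 0, 19;
    0, 0, -1, 0, 0, -54;
    0, -1, 0, 0, 0, 19;
    -1, 0, 0, 0, 0, -17;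
    0, 0, 0, 0, 0, 1]

def fR (x : V6) : V6 :=
  ⟨11 * x.e + 67 * x.f,
    (-1) * x.a + (-4) * x.e + (-30) * x.f,
    (-1) * x.b + 34 * x.e + 219 * x.f,
    (-1) * x.c + (-4) * x.e + (-44) * x.f,
    (-1) * x.d + 11 * x.e + 81 * x.f,
    (-1) * x.e + (-6) * x.f⟩

theorem fR_toV (x : V6) : (fR x).toV = (-rM) *ᵥ x.toV := by
  ext i
  fin_cases i <;> simp [fR, rM, V6.toV, mulVec, dotProduct, Fin.sum_univ_six] <;> ring

def fI (x : V6) : V6 :=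
  ⟨6 * x.a + x.b + 62 * x.f,
    (-15) * x.a + x.c + (-131) * x.f,
    20 * x.a + x.d + 216 * x.f,
    (-15) * x.a + x.e + (-154) * x.f,
    6 * x.a + 67 * x.f,
    (-1) * x.a + (-11) * x.f⟩

theorem fI_toV (x : V6) : (fI x).toV = (riM) *ᵥ x.toV := by
  ext i
  fin_cases i <;> simp [fI, riM, V6.toV, mulVec, dotProduct, Fin.sum_univ_six]

def fN (x : V6) : V6 :=
  ⟨(-6) * x.a + (-1) * x.b + (-62) * x.f,
    15 * x.a + (-1) * x.c + 131 * x.f,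
    (-20) * x.a + (-1) * x.d + (-216) * x.f,
    15 * x.a + (-1) * x.e + 154 * x.f,
    (-6) * x.a + (-67) * x.f,
    x.a + 11 * x.f⟩

theorem fN_toV (x : V6) : (fN x).toV = (-riM) *ᵥ x.toV := by
  ext i
  fin_cases i <;> simp [fN, riM, V6.toV, mulVec, dotProduct, Fin.sum_univ_six] <;> ring

def fT (x : V6) : V6 :=
  ⟨x.a + (-11) * x.f,
    x.b + 4 * x.f,
    x.c + (-34) * x.f,
    x.d + 4 * x.f,
    x.e + (-11) * x.f,
    x.f⟩

theorem fT_toV (x : V6) : (fT x).toV = (tM) *ᵥ x.toV := by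
  ext i
  fin_cases i <;> simp [fT, tM, V6.toV, mulVec, dotProduct, Fin.sum_univ_six]

def fU (x : V6) : V6 :=
  ⟨(-1) * x.e + (-28) * x.f,
    (-1) * x.d + 23 * x.f,
    (-1) * x.c + (-88) * x.f,
    (-1) * x.b + 23 * x.f,
    (-1) * x.a + (-28) * x.f,
    x.f⟩

theorem tM_mul_uM : tM * uM = !![0, 0, 0, 0, -1, -28; 0, 0, 0, -1, 0, 23; 0, 0, -1, 0, 0, -88;
    0, -1, 0, 0, 0, 23; -1, 0, 0, 0, 0, -28; 0, 0, 0, 0, 0, 1] := by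
  decide +kernel

theorem fU_toV (x : V6) : (fU x).toV = (tM * uM) *ᵥ x.toV := by
  rw [tM_mul_uM]
  ext i
  fin_cases i <;> simp [fU, V6.toV, mulVec, dotProduct, Fin.sum_univ_six]

theorem hKE : Maps (-rM) gK gE :=
  maps_of_chk fR_toV (S := gK6) (T := gE6) (C := cKE) (by decide +kernel)

theorem hKF : Maps riM gK gF :=
  maps_of_chk fI_toV (S := gK6) (T := gF6) (C := cKF) (by decide +kernel)

theorem hEE : Maps (-rM) gE gE :=
  maps_of_chk fR_toV (S := gE6) (T := gE6) (C := cEE) (by decide +kernel)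

theorem hFF : Maps (-riM) gF gF :=
  maps_of_chk fN_toV (S := gF6) (T := gF6) (C := cFF) (by decide +kernel)

theorem hEK : Maps tM gE gK :=
  maps_of_chk fT_toV (S := gE6) (T := gK6) (C := cEK) (by decide +kernel)

theorem hEUK : Maps (tM * uM) gE gK :=
  maps_of_chk fU_toV (S := gE6) (T := gK6) (C := cEUK) (by decide +kernel)

theorem hFK : Maps tM gF gK :=
  maps_of_chk fT_toV (S := gF6) (T := gK6) (C := cFK) (by decide +kernel)

theorem hFUK : Maps (tM * uM) gF gK :=
  maps_of_chk fU_toV (S := gF6) (T := gK6) (C := cFUK) (by decide +kernel)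

def vv : Fin 6 → ℤ := ![11, -4, 34, -4, 11, 0]
def ee : Fin 6 → ℤ := ![10, -8, 27, -11, 7, -1]
theorem vv_mem : vv ∈ gK := by decide +kernel
theorem ee_mem : ee ∈ gE := by decide +kernel
theorem phi_gE : ∀ g ∈ gE, 0 ≤ -(g 5) := by decide +kernel
theorem phi_gF : ∀ g ∈ gF, 0 ≤ -(g 5) := by decide +kernel
theorem z_gK : ∀ g ∈ gK, 0 ≤ ![1, 1, 1, 1, 1, 49] ⬝ᵥ g := by decide +kernel
theorem y_gK : ∀ g ∈ gK, 0 ≤ ![0, 0, 0, 0, 1, 6] ⬝ᵥ g := by decide +kernel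

/-- Membership in a cone up to sign. -/
def P (S : List (Fin 6 → ℤ)) (x : Fin 6 → ℤ) : Prop := x ∈ cone S ∨ -x ∈ cone S

theorem P_map {S S' : List (Fin 6 → ℤ)} {M : Matrix (Fin 6) (Fin 6) ℤ}
    (h : ∀ x ∈ cone S, P S' (M *ᵥ x)) {x : Fin 6 → ℤ} (hx : P S x) : P S' (M *ᵥ x) := by
  rcases hx with hx | hx
  · exact h x hx
  · have := h _ hx
    rw [mulVec_neg] at this
    rcases this with h | h
    · exact Or.inr h
    · exact Or.inl (by simpa using h)

theorem P_of_check_neg {S S' : List (Fin 6 → ℤ)} {M : Matrix (Fin 6) (Fin 6) ℤ}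
    (h : Maps (-M) S S') {x : Fin 6 → ℤ} (hx : P S x) :
    P S' (M *ᵥ x) := by
  refine P_map (fun y hy => Or.inr ?_) hx
  rw [← neg_mulVec]
  exact h _ hy

theorem P_of_check {S S' : List (Fin 6 → ℤ)} {M : Matrix (Fin 6) (Fin 6) ℤ}
    (h : Maps M S S') {x : Fin 6 → ℤ} (hx : P S x) :
    P S' (M *ᵥ x) :=
  P_map (fun _ hy => Or.inl (h _ hy)) hx

theorem tM_mulVec (x : Fin 6 → ℤ) : tM *ᵥ x = x + (-(x 5)) • vv := by
  ext i
  fin_cases i <;> simp [tM, vv, mulVec, dotProduct, Fin.sum_univ_six] <;> ring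

theorem tM_mulVec_five (x : Fin 6 → ℤ) : (tM *ᵥ x) 5 = x 5 := by
  rw [tM_mulVec]
  simp [vv]

theorem uM_mulVec_five (x : Fin 6 → ℤ) : (uM *ᵥ x) 5 = x 5 := by
  simp [uM, mulVec, dotProduct, Fin.sum_univ_six]

theorem tpow_mem {x : Fin 6 → ℤ} (hx : tM *ᵥ x ∈ cone gK) (h5 : 0 ≤ -(x 5)) (n : ℕ) :
    tM ^ (n + 1) *ᵥ x ∈ cone gK ∧ (tM ^ (n + 1) *ᵥ x) 5 = x 5 := by
  induction n with
  | zero => simpa using ⟨hx, tM_mulVec_five x⟩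
  | succ n ih =>
    rw [pow_succ', ← mulVec_mulVec]
    refine ⟨?_, (tM_mulVec_five _).trans ih.2⟩
    rw [tM_mulVec, ih.2]
    refine add_mem ih.1 ?_
    obtain ⟨k, hk⟩ := Int.eq_ofNat_of_zero_le h5
    rw [hk, natCast_zsmul]
    exact AddSubmonoid.nsmul_mem _ (mem_cone_of_mem vv_mem) k

theorem phi_nonneg {S : List (Fin 6 → ℤ)} (h : ∀ g ∈ S, 0 ≤ -(g 5)) {x : Fin 6 → ℤ}
    (hx : x ∈ cone S) : 0 ≤ -(x 5) :=
  cone_nonneg (-(Pi.evalAddMonoidHom (fun _ : Fin 6 => ℤ) 5)) h hx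

theorem tpow_P {S : List (Fin 6 → ℤ)}
    (h : ∀ g ∈ S, 0 ≤ -(g 5)) (hc : Maps tM S gK) (n : ℕ) {x : Fin 6 → ℤ}
    (hx : P S x) : P gK (tM ^ (n + 1) *ᵥ x) :=
  P_map (fun _ hy => Or.inl (tpow_mem (hc _ hy) (phi_nonneg h hy) n).1) hx

theorem tpow_uP {S : List (Fin 6 → ℤ)}
    (h : ∀ g ∈ S, 0 ≤ -(g 5)) (hc : Maps (tM * uM) S gK) (n : ℕ) {x : Fin 6 → ℤ}
    (hx : P S x) : P gK (tM ^ (n + 1) *ᵥ (uM *ᵥ x)) := by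
  rw [mulVec_mulVec]
  refine P_map (fun y hy => Or.inl ?_) hx
  rw [← mulVec_mulVec]
  refine (tpow_mem ?_ ?_ n).1
  · rw [mulVec_mulVec]
    exact hc _ hy
  · rw [uM_mulVec_five]
    exact phi_nonneg h hy

theorem rpow_P (n : ℕ) {x : Fin 6 → ℤ} (hx : P gK x) : P gE (rM ^ (n + 1) *ᵥ x) := by
  induction n with
  | zero => simpa using P_of_check_neg hKE hx
  | succ n ih =>
    rw [pow_succ', ← mulVec_mulVec]
    exact P_of_check_neg hEE ih

theorem ripow_P (n : ℕ) {x : Fin 6 → ℤ} (hx : P gK x) : P gF (riM ^ (n + 1) *ᵥ x) := by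
  induction n with
  | zero => simpa using P_of_check hKF hx
  | succ n ih =>
    rw [pow_succ', ← mulVec_mulVec]
    exact P_of_check_neg hFF ih

theorem uM_uM : uM * uM = 1 := by decide +kernel
theorem rM_riM : rM * riM = 1 := by decide +kernel
theorem riM_rM : riM * rM = 1 := by decide +kernel
theorem tut : tM * (uM * tM) = uM := by decide +kernel
theorem rur : rM * (uM * rM) = uM := by decide +kernel
theorem FtM : companionF * tM = companionG := by decide +kernel
theorem tMF : tM * companionF = rM := by decide +kernel
theorem uM_ee : uM *ᵥ ee = ee := by decide +kernel

/-- The action of invertible matrices on column vectors. -/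
@[reducible] def glAction : MulAction (GL (Fin 6) ℤ) (Fin 6 → ℤ) where
  smul g x := (g : Matrix (Fin 6) (Fin 6) ℤ) *ᵥ x
  one_smul x := one_mulVec x
  mul_smul g h x := (mulVec_mulVec x g.val h.val).symm

/-- The ping-pong set for `t`. -/
def X0 : Set (Fin 6 → ℤ) := {x | P gK x ∨ P gK (uM *ᵥ x)}

/-- The ping-pong set for `r`. -/
def X1 : Set (Fin 6 → ℤ) :=
  {x | (P gE x ∨ P gF x) ∨ (P gE (uM *ᵥ x) ∨ P gF (uM *ᵥ x))}

theorem uu (x : Fin 6 → ℤ) : uM *ᵥ (uM *ᵥ x) = x := by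
  rw [mulVec_mulVec, uM_uM, one_mulVec]

theorem u_X1 {x : Fin 6 → ℤ} (hx : x ∈ X1) : uM *ᵥ x ∈ X1 := by
  unfold X1 at *
  simp only [Set.mem_ofPred_eq, uu] at *
  exact hx.symm

theorem tpow_X1 (n : ℕ) {x : Fin 6 → ℤ} (hx : x ∈ X1) : P gK (tM ^ (n + 1) *ᵥ x) := by
  rcases hx with (h | h) | (h | h)
  · exact tpow_P phi_gE hEK n h
  · exact tpow_P phi_gF hFK n h
  · simpa only [uu] using tpow_uP phi_gE hEUK n h
  · simpa only [uu] using tpow_uP phi_gF hFUK n h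

theorem ee_X1 : ee ∈ X1 := Or.inl (Or.inl (Or.inl (mem_cone_of_mem ee_mem)))

theorem not_P_ee : ¬ P gK ee := by
  rintro (h | h)
  · have := cone_nonneg
      (f := AddMonoidHom.mk' (fun g : Fin 6 → ℤ => ![1, 1, 1, 1, 1, 49] ⬝ᵥ g)
        (fun _ _ => dotProduct_add _ _ _)) z_gK h
    revert this
    change ¬ (0 ≤ ![1, 1, 1, 1, 1, 49] ⬝ᵥ ee)
    decide +kernel
  · have := cone_nonneg
      (f := AddMonoidHom.mk' (fun g : Fin 6 → ℤ => ![0, 0, 0, 0, 1, 6] ⬝ᵥ g)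
        (fun _ _ => dotProduct_add _ _ _)) y_gK h
    revert this
    change ¬ (0 ≤ ![0, 0, 0, 0, 1, 6] ⬝ᵥ (-ee))
    decide +kernel

theorem ee_not_X0 : ee ∉ X0 := by
  rintro (h | h)
  · exact not_P_ee h
  · rw [uM_ee] at h
    exact not_P_ee h

theorem pow_val {t : GL (Fin 6) ℤ} {M : Matrix (Fin 6) (Fin 6) ℤ}
    (ht : (t : Matrix (Fin 6) (Fin 6) ℤ) = M) (n : ℕ) :
    ((t ^ n : GL (Fin 6) ℤ) : Matrix (Fin 6) (Fin 6) ℤ) = M ^ n := by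
  rw [Units.val_pow_eq_pow_val, ht]

/-- If `g u g = u` then `u` turns the powers of `g⁻¹` into the powers of `g`. -/
theorem u_zpow {g : GL (Fin 6) ℤ} {M : Matrix (Fin 6) (Fin 6) ℤ}
    (hg : (g : Matrix (Fin 6) (Fin 6) ℤ) = M) (h : M * (uM * M) = uM) (n : ℤ) (x : Fin 6 → ℤ) :
    uM *ᵥ (((g ^ n : GL (Fin 6) ℤ) : Matrix (Fin 6) (Fin 6) ℤ) *ᵥ x) =
      ((g ^ (-n) : GL (Fin 6) ℤ) : Matrix (Fin 6) (Fin 6) ℤ) *ᵥ (uM *ᵥ x) := by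
  let u : GL (Fin 6) ℤ := ⟨uM, uM, uM_uM, uM_uM⟩
  have h1 : g * (u * g) = u := by
    apply Units.ext
    rw [Units.val_mul, Units.val_mul, hg]
    exact h
  have h2 : SemiconjBy u g g⁻¹ := by
    change u * g = g⁻¹ * u
    rw [eq_inv_mul_iff_mul_eq, h1]
  have h3 : u * g ^ n = g ^ (-n) * u := by
    have := h2.zpow_right n
    rw [_root_.inv_zpow'] at this
    exact this
  have h4 : uM * ((g ^ n : GL (Fin 6) ℤ) : Matrix (Fin 6) (Fin 6) ℤ) =
      ((g ^ (-n) : GL (Fin 6) ℤ) : Matrix (Fin 6) (Fin 6) ℤ) * uM := congrArg Units.val h3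
  rw [mulVec_mulVec, mulVec_mulVec, h4]

theorem int_cases (n : ℤ) (hn : n ≠ 0) : ∃ m : ℕ, n = ((m + 1 : ℕ) : ℤ) ∨ n = -((m + 1 : ℕ) : ℤ) :=
  ⟨n.natAbs - 1, by omega⟩

theorem t_pingpong {t : GL (Fin 6) ℤ} (ht : (t : Matrix (Fin 6) (Fin 6) ℤ) = tM)
    (n : ℤ) (hn : n ≠ 0) (x : Fin 6 → ℤ) (hx : x ∈ X1) :
    ((t ^ n : GL (Fin 6) ℤ) : Matrix (Fin 6) (Fin 6) ℤ) *ᵥ x ∈ X0 := by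
  obtain ⟨m, rfl | rfl⟩ := int_cases n hn
  · left
    rw [zpow_natCast, pow_val ht]
    exact tpow_X1 m hx
  · right
    rw [u_zpow ht tut, neg_neg, zpow_natCast, pow_val ht]
    exact tpow_X1 m (u_X1 hx)

theorem r_pingpong {r : GL (Fin 6) ℤ} (hr : (r : Matrix (Fin 6) (Fin 6) ℤ) = rM)
    (n : ℤ) (hn : n ≠ 0) (x : Fin 6 → ℤ) (hx : x ∈ X0) :
    ((r ^ n : GL (Fin 6) ℤ) : Matrix (Fin 6) (Fin 6) ℤ) *ᵥ x ∈ X1 := by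
  have hri : ((r⁻¹ : GL (Fin 6) ℤ) : Matrix (Fin 6) (Fin 6) ℤ) = riM := by
    have : r⁻¹ = ⟨riM, rM, riM_rM, rM_riM⟩ := by
      rw [inv_eq_iff_mul_eq_one]
      apply Units.ext
      rw [Units.val_mul, hr]
      exact rM_riM
    rw [this]
  obtain ⟨m, rfl | rfl⟩ := int_cases n hn
  · rcases hx with hx | hx
    · left; left
      rw [zpow_natCast, pow_val hr]
      exact rpow_P m hx
    · right; right
      rw [u_zpow hr rur, ← _root_.inv_zpow', zpow_natCast, pow_val hri]
      exact ripow_P m hx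
  · rcases hx with hx | hx
    · left; right
      rw [← _root_.inv_zpow', zpow_natCast, pow_val hri]
      exact ripow_P m hx
    · right; left
      rw [u_zpow hr rur, neg_neg, zpow_natCast, pow_val hr]
      exact rpow_P m hx

end HypFree


/-- The hypergeometric group with `α = (0,0,0,0,0,0)`, `β = (1/2,1/2,1/2,1/2,1/3,2/3)` is
free of rank two: `t = A⁻¹B` and `r = A⁻¹BA` have infinite order, generate the group
generated by `A` and `B`, and the group is the internal free product of `⟨t⟩` and `⟨r⟩`;
in particular it is isomorphic to `ℤ * ℤ`, the free group of rank `2`. -/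
theorem hypergeometric_free_of_rank_two
    (A B : GL (Fin 6) ℤ)
    (hA : (A : Matrix (Fin 6) (Fin 6) ℤ) = companionF)
    (hB : (B : Matrix (Fin 6) (Fin 6) ℤ) = companionG) :
    ¬ IsOfFinOrder (A⁻¹ * B) ∧ ¬ IsOfFinOrder (A⁻¹ * B * A) ∧
    Subgroup.closure {A, B} = Subgroup.closure {A⁻¹ * B, A⁻¹ * B * A} ∧
    Function.Injective
      (Monoid.Coprod.lift (Subgroup.zpowers (A⁻¹ * B)).subtype
        (Subgroup.zpowers (A⁻¹ * B * A)).subtype) ∧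
    (Monoid.Coprod.lift (Subgroup.zpowers (A⁻¹ * B)).subtype
        (Subgroup.zpowers (A⁻¹ * B * A)).subtype).range = Subgroup.closure {A, B} ∧
    Nonempty ((Subgroup.closure {A, B} : Subgroup (GL (Fin 6) ℤ)) ≃* FreeGroup (Fin 2)) := by
  have ht : ((A⁻¹ * B : GL (Fin 6) ℤ) : Matrix (Fin 6) (Fin 6) ℤ) = HypFree.tM := by
    have h : (A : Matrix (Fin 6) (Fin 6) ℤ) *
        ((A⁻¹ * B : GL (Fin 6) ℤ) : Matrix (Fin 6) (Fin 6) ℤ) = companionG := by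
      rw [← Units.val_mul, mul_inv_cancel_left, hB]
    rw [← HypFree.FtM, ← hA] at h
    exact (Units.mul_right_inj A).mp h
  have hr : ((A⁻¹ * B * A : GL (Fin 6) ℤ) : Matrix (Fin 6) (Fin 6) ℤ) = HypFree.rM := by
    rw [Units.val_mul, ht, hA, HypFree.tMF]
  have hcl : Subgroup.closure {A, B} = Subgroup.closure {A⁻¹ * B, A⁻¹ * B * A} := by
    apply le_antisymm
    · have h1 : A⁻¹ * B ∈ Subgroup.closure {A⁻¹ * B, A⁻¹ * B * A} :=
        Subgroup.subset_closure (by simp)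
      have h2 : A⁻¹ * B * A ∈ Subgroup.closure {A⁻¹ * B, A⁻¹ * B * A} :=
        Subgroup.subset_closure (by simp)
      have hAm : A ∈ Subgroup.closure {A⁻¹ * B, A⁻¹ * B * A} := by
        have := mul_mem (inv_mem h1) h2
        rwa [inv_mul_cancel_left] at this
      have hBm : B ∈ Subgroup.closure {A⁻¹ * B, A⁻¹ * B * A} := by
        have := mul_mem hAm h1
        rwa [mul_inv_cancel_left] at this
      rw [Subgroup.closure_le]
      rintro x (rfl | rfl)
      · exact hAm
      · exact hBm
    · have h1 : A ∈ Subgroup.closure {A, B} := Subgroup.subset_closure (by simp)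
      have h2 : B ∈ Subgroup.closure {A, B} := Subgroup.subset_closure (by simp)
      rw [Subgroup.closure_le]
      rintro x (rfl | rfl)
      · exact mul_mem (inv_mem h1) h2
      · exact mul_mem (mul_mem (inv_mem h1) h2) h1
  have hinj : Function.Injective (FreeGroup.lift ![A⁻¹ * B, A⁻¹ * B * A]) :=
    @HypFree.lift_injective _ _ ![A⁻¹ * B, A⁻¹ * B * A] _ HypFree.glAction
      ![HypFree.X0, HypFree.X1]
      (fun n hn x hx => HypFree.t_pingpong ht n hn x hx)
      (fun n hn x hx => HypFree.r_pingpong hr n hn x hx)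
      HypFree.ee HypFree.ee_X1 HypFree.ee_not_X0
  obtain ⟨k1, k2, k3, k4, k5⟩ := HypFree.final_of_injective _ _ hinj
  refine ⟨k1, k2, hcl, k3, ?_, ?_⟩
  · rw [hcl]
    exact k4
  · rw [hcl]
    exact k5
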